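/- Let G = (V,E) be a graph, u ∈ V, and i a nonnegative integer. If S and S′ are two label assignments on G such that S(v) = S′(v) for every vertex v at graph distance at most i+1 from u, then u has the same colour at time i with respect to S as with respect to S′. In particular, the colour of u at time i is determined by the restriction of the label assignment to the ball of radius i+1 around u. -/

import Mathlib

open MeasureTheory ProbabilityTheory Filter Set

namespace InducedForest

variable {V : Type*}

/-- Label `i` is *relevant* for vertex `v` (w.r.t. the label assignment `S`):
either `i = 0` and `0 ∈ S v`, or `i ∈ S v`, no `j < i` is relevant for `v`, and
there is a unique neighbour of `v` having a relevant label strictly smaller than `i`. -/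
def Relevant (G : SimpleGraph V) (S : V → Set ℕ) (i : ℕ) : V → Prop :=
  Nat.strongRecOn i (fun i ih v =>
    (i = 0 ∧ 0 ∈ S v) ∨
    (i ∈ S v ∧ (∀ j, (h : j < i) → ¬ ih j h v) ∧
      (∃! u, G.Adj v u ∧ ∃ j, ∃ h : j < i, ih j h u)))

/-- `v` has some relevant label `≤ l`, i.e. `v ∈ R_{≤ l}`. -/
def RelevantLe (G : SimpleGraph V) (S : V → Set ℕ) (l : ℕ) (v : V) : Prop :=
  ∃ i ≤ l, Relevant G S i v

inductive Colour | white | blue | orange | purple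
deriving DecidableEq

open Classical in
/-- The colour of `u` at time `l`. -/
noncomputable def colourAt (G : SimpleGraph V) (S : V → Set ℕ) (l : ℕ) (u : V) : Colour :=
  if RelevantLe G S l u then Colour.purple
  else if ∀ v, G.Adj u v → ¬ RelevantLe G S l v then Colour.white
  else if ∃! v, G.Adj u v ∧ RelevantLe G S l v then Colour.blue
  else Colour.orange

/-- The set `W_l` of white vertices at time `l`. -/
def White (G : SimpleGraph V) (S : V → Set ℕ) (l : ℕ) : Set V :=
  {u | ¬ RelevantLe G S l u ∧ ∀ v, G.Adj u v → ¬ RelevantLe G S l v}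

/-- The set `B_l` of blue vertices at time `l`. -/
def Blue (G : SimpleGraph V) (S : V → Set ℕ) (l : ℕ) : Set V :=
  {u | ¬ RelevantLe G S l u ∧ ∃! v, G.Adj u v ∧ RelevantLe G S l v}

theorem relevant_iff (G : SimpleGraph V) (S : V → Set ℕ) (i : ℕ) (v : V) :
    Relevant G S i v ↔ (i = 0 ∧ 0 ∈ S v) ∨
    (i ∈ S v ∧ (∀ j, j < i → ¬ Relevant G S j v) ∧
      (∃! u, G.Adj v u ∧ ∃ j, ∃ _ : j < i, Relevant G S j u)) := by
  unfold Relevant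
  rw [Nat.strongRecOn_eq]

/-- Relevance of label `i` at `u` only depends on labels at the ends of walks of length `≤ i`. -/
theorem relevant_congr (G : SimpleGraph V) (S S' : V → Set ℕ) (i : ℕ) :
    ∀ u : V, (∀ v : V, ∀ p : G.Walk u v, p.length ≤ i → S v = S' v) →
      (Relevant G S i u ↔ Relevant G S' i u) := by
  induction i using Nat.strong_induction_on with
  | _ i ih =>
    intro u h
    have h0 : S u = S' u := h u SimpleGraph.Walk.nil (by simp)
    have h1 : ∀ j, j < i → (Relevant G S j u ↔ Relevant G S' j u) := fun j hj =>
      ih j hj u (fun v p hp => h v p (by omega))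
    have h2 : ∀ w, G.Adj u w → ∀ j, j < i → (Relevant G S j w ↔ Relevant G S' j w) :=
      fun w hw j hj => ih j hj w (fun v p hp =>
        h v (SimpleGraph.Walk.cons hw p) (by rw [SimpleGraph.Walk.length_cons]; omega))
    rw [relevant_iff, relevant_iff G S', h0]
    refine or_congr Iff.rfl (and_congr Iff.rfl (and_congr ?_ ?_))
    · exact forall_congr' fun j => forall_congr' fun hj => not_congr (h1 j hj)
    · exact existsUnique_congr fun w => and_congr_right fun hw =>
        exists_congr fun j => exists_congr fun hj => h2 w hw j hj

/-- The colour of `u` at time `i` only depends on the labels of vertices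
at graph distance at most `i + 1` from `u`. -/
theorem colourAt_eq_of_eqOn_ball
    (G : SimpleGraph V) (S S' : V → Set ℕ) (u : V) (i : ℕ)
    (h : ∀ v : V, G.Reachable u v → G.dist u v ≤ i + 1 → S v = S' v) :
    colourAt G S i u = colourAt G S' i u := by
  have hw : ∀ v : V, ∀ p : G.Walk u v, p.length ≤ i + 1 → S v = S' v := fun v p hp =>
    h v p.reachable ((SimpleGraph.dist_le p).trans hp)
  have h1 : RelevantLe G S i u ↔ RelevantLe G S' i u :=
    exists_congr fun j => and_congr_right fun hj =>
      relevant_congr G S S' j u (fun v p hp => hw v p (by omega))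
  have h2 : ∀ w, G.Adj u w → (RelevantLe G S i w ↔ RelevantLe G S' i w) := fun w hadj =>
    exists_congr fun j => and_congr_right fun hj =>
      relevant_congr G S S' j w (fun v p hp =>
        hw v (SimpleGraph.Walk.cons hadj p) (by rw [SimpleGraph.Walk.length_cons]; omega))
  have h3 : (∀ v, G.Adj u v → ¬ RelevantLe G S i v) ↔
      (∀ v, G.Adj u v → ¬ RelevantLe G S' i v) :=
    forall_congr' fun v => forall_congr' fun hv => not_congr (h2 v hv)
  have h4 : (∃! v, G.Adj u v ∧ RelevantLe G S i v) ↔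
      (∃! v, G.Adj u v ∧ RelevantLe G S' i v) :=
    existsUnique_congr fun v => and_congr_right fun hv => h2 v hv
  classical
  unfold colourAt
  exact if_congr h1 rfl (if_congr h3 rfl (if_congr h4 rfl rfl))

end InducedForest
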